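/- Let q be a prime power, h ∈ GL_n(𝔽_q), π ∈ S_n, and 1 ≤ i ≤ n−1. Then proj_{S_n}( (hB)·T_i ) = proj_{S_n}(hB)·T_i in ℂS_n, and incl_{G/B}( π·T_i ) = incl_{G/B}(π)·T_i in ℂ[G/B]; that is, the projection and inclusion maps intertwine the Hecke generator actions on ℂ[G/B] and ℂS_n. -/

import Mathlib

open scoped Classical
set_option synthInstance.maxHeartbeats 1000000
set_option maxHeartbeats 1000000

noncomputable section

namespace QTsetlin

/-- `M` is upper triangular. -/
def upperTri {F : Type} [Field F] {n : ℕ} (M : Matrix (Fin n) (Fin n) F) : Prop :=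
  ∀ i j : Fin n, j < i → M i j = 0

/-- `M` is lower triangular. -/
def lowerTri {F : Type} [Field F] {n : ℕ} (M : Matrix (Fin n) (Fin n) F) : Prop :=
  ∀ i j : Fin n, i < j → M i j = 0

variable (F : Type) [Field F] [Fintype F] [DecidableEq F] (n : ℕ)

/-- The general linear group `G = GL_n(F_q)`. -/
abbrev GLn := GL (Fin n) F

/-- The Borel subgroup `B` of invertible upper triangular matrices. -/
def Bsub : Subgroup (GLn F n) where
  carrier := {g | upperTri (g : Matrix (Fin n) (Fin n) F)}
  one_mem' := by
    intro i j hij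
    simp [Matrix.one_apply, (Fin.ne_of_lt hij).symm]
  mul_mem' := by
    intro a b ha hb i j hij
    exact Matrix.BlockTriangular.mul ha hb hij
  inv_mem' := by
    intro a ha
    have hdet : IsUnit ((a : Matrix (Fin n) (Fin n) F).det) :=
      (Matrix.isUnit_iff_isUnit_det _).mp a.isUnit
    have hinv : Invertible (a : Matrix (Fin n) (Fin n) F) :=
      Matrix.invertibleOfIsUnitDet _ hdet
    have h2 : ((a : Matrix (Fin n) (Fin n) F)⁻¹).BlockTriangular (id : Fin n → Fin n) :=
      Matrix.blockTriangular_inv_of_blockTriangular ha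
    show upperTri ((a⁻¹ : GLn F n) : Matrix (Fin n) (Fin n) F)
    rw [show ((a⁻¹ : GLn F n) : Matrix (Fin n) (Fin n) F)
        = (a : Matrix (Fin n) (Fin n) F)⁻¹ from Matrix.coe_units_inv a]
    exact h2

/-- The set of cosets `G/B`. -/
abbrev Cosets := GLn F n ⧸ Bsub F n

/-- permutation matrix of `π`: entry 1 in positions `(π j, j)`. -/
def permMat (π : Equiv.Perm (Fin n)) : Matrix (Fin n) (Fin n) F :=
  fun i j => if π j = i then 1 else 0

lemma permMat_mul (π σ : Equiv.Perm (Fin n)) :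
    permMat F n π * permMat F n σ = permMat F n (π * σ) := by
  ext i j
  rw [Matrix.mul_apply]
  simp only [permMat, mul_ite, ite_mul, one_mul, mul_one, mul_zero, zero_mul]
  rw [Finset.sum_eq_single (σ j)]
  · by_cases h : π (σ j) = i <;> simp [Equiv.Perm.mul_apply, h]
  · intro k _ hk
    simp [hk.symm]
  · simp

lemma permMat_one : permMat F n 1 = 1 := by
  ext i j
  simp [permMat, Matrix.one_apply, eq_comm]

/-- The permutation matrix of `π`, as an element of `GL_n(F)`. -/
def permGL (π : Equiv.Perm (Fin n)) : GLn F n :=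
  ⟨permMat F n π, permMat F n π⁻¹,
    by rw [permMat_mul, mul_inv_cancel, permMat_one],
    by rw [permMat_mul, inv_mul_cancel, permMat_one]⟩

/-- `f_i(t)`: identity matrix with an extra entry `t` in position `(r, c)`, as an
element of `GL_n(F)`. -/
def transvGL (r c : Fin n) (h : r ≠ c) (t : F) : GLn F n :=
  ⟨Matrix.transvection r c t, Matrix.transvection r c (-t),
    by rw [Matrix.transvection_mul_transvection_same _ _ h, add_neg_cancel,
      Matrix.transvection_zero],
    by rw [Matrix.transvection_mul_transvection_same _ _ h, neg_add_cancel,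
      Matrix.transvection_zero]⟩

variable (K : Type) [Field K]

/-- Matrix (row convention: row `gB` is `(gB) · T_{k+1}`) of the Hecke generator `T_{k+1}`
(paper indexing) on `ℂ[G/B]`:
`(gB)·T_i = g s_i B + ∑_{t ≠ 0} g f_i(t) B`, where `s_i` swaps (0-based) positions `k, k+1`
and `f_i(t)` has an extra entry `t` in (0-based) position `(k+1, k)`. -/
def genGB (k : ℕ) : Matrix (Cosets F n) (Cosets F n) K := fun C D =>
  if h : k + 1 < n then
    (if (QuotientGroup.mk (C.out * permGL F n
          (Equiv.swap ⟨k, Nat.lt_of_succ_lt h⟩ ⟨k + 1, h⟩)) : Cosets F n) = D then 1 else 0)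
    + ((Finset.univ.filter fun t : F => t ≠ 0 ∧
        (QuotientGroup.mk (C.out * transvGL F n ⟨k + 1, h⟩ ⟨k, Nat.lt_of_succ_lt h⟩
          (fun hc => by simp [Fin.ext_iff] at hc) t) : Cosets F n) = D).card : K)
  else 0

/-- Matrix of the product `T_k T_{k-1} ⋯ T_1` (paper indexing) on `ℂ[G/B]`. -/
def prodGenGB : ℕ → Matrix (Cosets F n) (Cosets F n) K
  | 0 => 1
  | k + 1 => genGB F n K k * prodGenGB k

/-- The (0-based) row index of the leading entry (the pivot `1` of the distinguished coset
representative) in the first column of a representative of the coset `C`. -/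
def pivotRow (C : Cosets F n) : ℕ :=
  sInf {i : ℕ | ∃ h : i < n,
    ((C.out : GLn F n) : Matrix (Fin n) (Fin n) F) ⟨i, h⟩
      ⟨0, Nat.lt_of_le_of_lt (Nat.zero_le i) h⟩ ≠ 0}

/-- Matrix of the weighting operator `X_{G/B}(q,x)`, where `q` is the cardinality of the
field: `gB ↦ (x_i / q^{n-i}) gB` with `i` the row index of the leading 1 in the first
column of the distinguished representative of `gB`. -/
def XGB (x : Fin n → K) : Matrix (Cosets F n) (Cosets F n) K := fun C D =>
  if D = C then
    (if h : pivotRow F n C < n then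
      x ⟨pivotRow F n C, h⟩ / (Fintype.card F : K) ^ (n - 1 - pivotRow F n C)
    else 0)
  else 0

/-- Matrix of the q-Tsetlin library operator
`T_{G/B}(q,x) = (∑_{i=1}^n T_{i-1} ⋯ T_1) ∘ X_{G/B}(q,x)` on `ℂ[G/B]` (row convention). -/
def TGB (x : Fin n → K) : Matrix (Cosets F n) (Cosets F n) K :=
  (∑ k ∈ Finset.range n, prodGenGB F n K k) * XGB F n K x

/-- The coset `gB` belongs to the double coset `[π] = B⁻ π B`. -/
def inDC (π : Equiv.Perm (Fin n)) (C : Cosets F n) : Prop :=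
  ∃ l b : GLn F n, lowerTri (l : Matrix (Fin n) (Fin n) F) ∧
    upperTri (b : Matrix (Fin n) (Fin n) F) ∧
    C = QuotientGroup.mk (l * permGL F n π * b)

/-- Number of inversions of a permutation. -/
def invCount {m : ℕ} (π : Equiv.Perm (Fin m)) : ℕ :=
  (Finset.univ.filter fun p : Fin m × Fin m => p.1 < p.2 ∧ π p.2 < π p.1).card

/-- Matrix (row convention) of the Hecke generator `T_{k+1}` (paper indexing) on `ℂS_n`. -/
def genMatP (m : ℕ) {R : Type} [Field R] (q : R) (k : ℕ) :
    Matrix (Equiv.Perm (Fin m)) (Equiv.Perm (Fin m)) R := fun π σ =>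
  if h : k + 1 < m then
    if π ⟨k + 1, h⟩ < π ⟨k, Nat.lt_of_succ_lt h⟩ then
      (if σ = π * Equiv.swap ⟨k, Nat.lt_of_succ_lt h⟩ ⟨k + 1, h⟩ then q else 0)
    else
      (if σ = π * Equiv.swap ⟨k, Nat.lt_of_succ_lt h⟩ ⟨k + 1, h⟩ then 1 else 0)
        + (if σ = π then q - 1 else 0)
  else 0

/-- The matrix of the projection `proj_{S_n} : ℂ[G/B] → ℂS_n`, `gB ↦ π` for `gB ∈ [π]`. -/
def projMat : Matrix (Cosets F n) (Equiv.Perm (Fin n)) K := fun C π =>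
  if inDC F n π C then 1 else 0

/-- The matrix of the inclusion `incl_{G/B} : ℂS_n → ℂ[G/B]`,
`π ↦ q^{inv(π)} ∑_{gB ∈ [π]} gB`. -/
def inclMat : Matrix (Equiv.Perm (Fin n)) (Cosets F n) K := fun π C =>
  if inDC F n π C then (Fintype.card F : K) ^ invCount π else 0

end QTsetlin

/-!
For the minimal parabolic subgroup `P ⊇ B` at the positions `i, i + 1`, the generator `T_i` sends
`gB` to the sum of the other cosets contained in `gP`; in particular its matrix on `ℂ[G/B]` is
symmetric. If `gB` lies in the cell `[π]`, then among these `q` cosets either one lies in `[π s_i]`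
and the others in `[π]`, when `π` has an ascent at `i`, or all of them lie in `[π s_i]`, when `π`
has a descent there. This is the rule defining `T_i` on `ℂS_n`, so the projection intertwines.

The inclusion is the transpose of the projection rescaled by the weights `q ^ inv(π)`. These weights
satisfy detailed balance for `T_i` on `ℂS_n`, because `inv(π s_i) = inv(π) + 1` at an ascent. Hence
transposing the identity for the projection gives the identity for the inclusion.
-/

namespace QTsetlin

open OrderDual (toDual)
open scoped Matrix

lemma perm_eq_one_of_forall_le {α : Type*} [PartialOrder α] [WellFoundedLT α]
    {σ : Equiv.Perm α} (hσ : ∀ x, σ x ≤ x) : σ = 1 := by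
  ext x
  induction x using WellFoundedLT.induction with
  | ind x ih =>
    by_contra hne
    exact hne (σ.injective (ih (σ x) ((hσ x).lt_of_ne hne)))

lemma mk_mul_eq_mk_iff {G : Type*} [Group G] {H : Subgroup G} (g y d : G) :
    (QuotientGroup.mk (g * y) : G ⧸ H) = QuotientGroup.mk d ↔ y⁻¹ * (g⁻¹ * d) ∈ H := by
  rw [QuotientGroup.eq, mul_inv_rev, mul_assoc]

section BlockTriangular

variable {m α R : Type*} [Fintype m] [DecidableEq m] [LinearOrder α] [CommRing R]

/-- The group of invertible matrices that are block upper triangular with respect to the level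
function `b`. The choices `b = id` and `b = toDual` give the Borel subgroup and its opposite;
coarser level functions give the standard parabolic subgroups. -/
def blockTriangularSubgroup (R : Type*) [CommRing R] (b : m → α) : Subgroup (GL m R) where
  carrier := {g | (g : Matrix m m R).BlockTriangular b}
  one_mem' := Matrix.blockTriangular_one
  mul_mem' := Matrix.BlockTriangular.mul
  inv_mem' {g} hg := by
    simpa only [Set.mem_ofPred_eq, Matrix.coe_units_inv] using
      Matrix.blockTriangular_inv_of_blockTriangular hg

lemma blockTriangularSubgroup_le_comp {β : Type*} [LinearOrder β] {f : α → β} (hf : Monotone f)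
    (b : m → α) : blockTriangularSubgroup R b ≤ blockTriangularSubgroup R (f ∘ b) :=
  fun _ hg _ _ hij => hg (hf.reflect_lt hij)

variable [LinearOrder m]

lemma isUnit_apply_self_of_isUpperTriangular {g : GL m R}
    (hg : (g : Matrix m m R).IsUpperTriangular) (i : m) : IsUnit (g i i) := by
  have hdet := (Matrix.isUnit_iff_isUnit_det _).mp g.isUnit
  rw [Matrix.det_of_isUpperTriangular hg] at hdet
  exact IsUnit.prod_univ_iff.mp hdet i

lemma isUnit_apply_self_of_isLowerTriangular {g : GL m R}
    (hg : (g : Matrix m m R).IsLowerTriangular) (i : m) : IsUnit (g i i) := by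
  have hdet := (Matrix.isUnit_iff_isUnit_det _).mp g.isUnit
  rw [Matrix.det_of_isLowerTriangular _ hg] at hdet
  exact IsUnit.prod_univ_iff.mp hdet i

end BlockTriangular

section Parabolic

variable {F : Type} [Field F] {n : ℕ} {r s : Fin n}

/-- The opposite Borel subgroup `B⁻` of invertible lower triangular matrices. -/
abbrev oppositeBorel (F : Type) [Field F] (n : ℕ) : Subgroup (GLn F n) :=
  blockTriangularSubgroup F (toDual : Fin n → (Fin n)ᵒᵈ)

/-- The parabolic subgroup obtained from `B` by giving the adjacent positions `r ⋖ s` the same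
level, so that the entry in position `(s, r)` may be nonzero. -/
abbrev minimalParabolic (F : Type) [Field F] {n : ℕ} (r s : Fin n) : Subgroup (GLn F n) :=
  blockTriangularSubgroup F (Function.update id s r)

lemma monotone_update_id (hrs : r ⋖ s) : Monotone (Function.update id s r) := by
  intro i j hij
  by_cases hj : j = s <;> by_cases hi : i = s
  · simp [hi, hj]
  · simpa [hi, hj] using hrs.le_of_lt (lt_of_le_of_ne (hj ▸ hij) hi)
  · simpa [hi, hj] using hrs.le.trans (hi ▸ hij)
  · simpa [hi, hj] using hij

lemma Bsub_le_minimalParabolic (hrs : r ⋖ s) : Bsub F n ≤ minimalParabolic F r s :=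
  blockTriangularSubgroup_le_comp (monotone_update_id hrs) id

lemma mem_Bsub_iff_of_mem_minimalParabolic (hrs : r ⋖ s) {g : GLn F n}
    (hg : g ∈ minimalParabolic F r s) : g ∈ Bsub F n ↔ g s r = 0 := by
  refine ⟨fun hB => hB s r hrs.lt, fun h0 i j hij => ?_⟩
  by_cases hi : i = s
  · subst hi
    obtain rfl | hj := eq_or_ne j r
    · exact h0
    · exact hg (by simpa [hij.ne] using lt_of_le_of_ne (hrs.le_of_lt hij) hj)
  · by_cases hj : j = s
    · exact hg (by simpa [hi, hj] using hrs.lt.trans (hj ▸ hij))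
    · exact hg (by simpa [hi, hj] using hij)

lemma transvGL_mem_blockTriangularSubgroup {α : Type*} [LinearOrder α] {b : Fin n → α}
    (hne : r ≠ s) (h : b r ≤ b s) (t : F) :
    transvGL F n r s hne t ∈ blockTriangularSubgroup F b :=
  Matrix.blockTriangular_transvection h t

lemma transvGL_inv_mul_apply_same (hne : r ≠ s) (t : F) (g : GLn F n) (j : Fin n) :
    ((transvGL F n r s hne t)⁻¹ * g) r j = g r j - t * g s j :=
  (Matrix.transvection_mul_apply_same r s j (-t) (g : Matrix (Fin n) (Fin n) F)).trans (by ring)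

lemma transvGL_mem_minimalParabolic (hrs : r ⋖ s) (t : F) :
    transvGL F n s r hrs.ne' t ∈ minimalParabolic F r s :=
  transvGL_mem_blockTriangularSubgroup _ (by simp [hrs.ne]) t

lemma transvGL_inv_mul_mem_Bsub_iff (hrs : r ⋖ s) {g : GLn F n}
    (hg : g ∈ minimalParabolic F r s) (t : F) :
    (transvGL F n s r hrs.ne' t)⁻¹ * g ∈ Bsub F n ↔ g s r = t * g r r := by
  rw [mem_Bsub_iff_of_mem_minimalParabolic hrs
      (mul_mem (inv_mem (transvGL_mem_minimalParabolic hrs t)) hg),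
    transvGL_inv_mul_apply_same, sub_eq_zero]

end Parabolic

-- A point `[a : b]` of the projective line other than `[1 : 0]` is either `[0 : 1]` or `[1 : t]`
-- for a unique `t ≠ 0`.
lemma ite_add_sum_ite_eq_mul {F K : Type*} [Field F] [Fintype F] [DecidableEq F]
    [AddCommMonoidWithOne K] {a b : F} (hab : b = 0 → a ≠ 0) :
    (if a = 0 then (1 : K) else 0) + ∑ t ∈ ({0}ᶜ : Finset F), (if b = t * a then 1 else 0) =
      if b = 0 then 0 else 1 := by
  obtain rfl | ha := eq_or_ne a 0
  · have hb : b ≠ 0 := fun hb => hab hb rfl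
    simp [hb]
  · simp [← div_eq_iff ha, ha, ite_not]

section Perm

variable {F : Type} [Field F] [Fintype F] [DecidableEq F] {n : ℕ} {r s : Fin n}

lemma coe_permGL (π : Equiv.Perm (Fin n)) :
    (permGL F n π : Matrix (Fin n) (Fin n) F) = π⁻¹.permMatrix F := by
  ext i j
  simp [permGL, permMat, PEquiv.toMatrix_apply, Equiv.eq_symm_apply, eq_comm]

lemma coe_permGL_mul (π : Equiv.Perm (Fin n)) (g : GLn F n) :
    ((permGL F n π * g : GLn F n) : Matrix (Fin n) (Fin n) F) =
      (g : Matrix (Fin n) (Fin n) F).submatrix ⇑π⁻¹ id := by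
  rw [Units.val_mul, coe_permGL, PEquiv.toMatrix_toPEquiv_mul]

lemma coe_mul_permGL (g : GLn F n) (π : Equiv.Perm (Fin n)) :
    ((g * permGL F n π : GLn F n) : Matrix (Fin n) (Fin n) F) =
      (g : Matrix (Fin n) (Fin n) F).submatrix id π := by
  rw [Units.val_mul, coe_permGL, PEquiv.mul_toMatrix_toPEquiv]
  rfl

lemma permGL_mul (π σ : Equiv.Perm (Fin n)) :
    permGL F n (π * σ) = permGL F n π * permGL F n σ :=
  Units.ext (permMat_mul F n π σ).symm

lemma permGL_inv (π : Equiv.Perm (Fin n)) : permGL F n π⁻¹ = (permGL F n π)⁻¹ := rfl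

lemma permGL_mem_blockTriangularSubgroup {α : Type*} [LinearOrder α] {b : Fin n → α}
    {π : Equiv.Perm (Fin n)} (hπ : ∀ i, b (π i) ≤ b i) :
    permGL F n π ∈ blockTriangularSubgroup F b := fun i j hij =>
  if_neg fun h : π j = i => (hπ j).not_gt (h ▸ hij)

lemma permGL_mul_transvGL (π : Equiv.Perm (Fin n)) (hne : r ≠ s) (t : F) :
    permGL F n π * transvGL F n r s hne t =
      transvGL F n (π r) (π s) (π.injective.ne hne) t * permGL F n π := by
  apply Units.ext
  rw [coe_permGL_mul, coe_mul_permGL]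
  ext i j
  simp [transvGL, Matrix.transvection, Matrix.one_apply, Matrix.single_apply,
    Equiv.symm_apply_eq, Equiv.eq_symm_apply]

lemma permGL_swap_mem_minimalParabolic (r s : Fin n) :
    permGL F n (Equiv.swap r s) ∈ minimalParabolic F r s := by
  refine permGL_mem_blockTriangularSubgroup fun i => le_of_eq ?_
  rw [Equiv.swap_apply_def]
  split_ifs with hr hs
  · simp [Function.update_apply, hr]
  · simp [Function.update_apply, hs]
  · rfl

lemma permGL_swap_inv_mul_mem_Bsub_iff (hrs : r ⋖ s) {g : GLn F n}
    (hg : g ∈ minimalParabolic F r s) :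
    (permGL F n (Equiv.swap r s))⁻¹ * g ∈ Bsub F n ↔ g r r = 0 := by
  rw [mem_Bsub_iff_of_mem_minimalParabolic hrs
    (mul_mem (inv_mem (permGL_swap_mem_minimalParabolic r s)) hg), ← permGL_inv, coe_permGL_mul]
  simp

end Perm

section HeckeAction

variable {F : Type} [Field F] [Fintype F] [DecidableEq F] {n : ℕ} {K : Type} [Field K]
  {r s : Fin n}

/-- The vector `(gB)·T_i` of `K[G/B]`, for `T_i` the generator at the adjacent positions `r ⋖ s`,
computed from the chosen representative `g`. -/
def heckeVec (F : Type) [Field F] [Fintype F] [DecidableEq F] {n : ℕ} (K : Type) [Field K]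
    {r s : Fin n} (hrs : r ⋖ s) (g : GLn F n) : Cosets F n → K :=
  Pi.single (QuotientGroup.mk (g * permGL F n (Equiv.swap r s))) 1 +
    ∑ t ∈ {0}ᶜ, Pi.single (QuotientGroup.mk (g * transvGL F n s r hrs.ne' t)) 1

lemma genGB_eq_heckeVec_out (hrs : r ⋖ s) (C : Cosets F n) :
    genGB F n K r C = heckeVec F K hrs C.out := by
  obtain ⟨s, hs⟩ := s
  obtain rfl : (r : ℕ) + 1 = s := Nat.covBy_iff_add_one_eq.mp (Fin.covBy_iff.mp hrs)
  ext D
  simp only [genGB, hs, dif_pos, heckeVec, Pi.add_apply, Finset.sum_apply, Pi.single_apply,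
    Finset.sum_boole, eq_comm (a := D)]
  congr 3
  ext t
  simp

-- Right multiplication by `T_i` sends `gB` to the sum of the other cosets in `gP`.
lemma heckeVec_apply_mk (hrs : r ⋖ s) (g d : GLn F n) :
    heckeVec F K hrs g (QuotientGroup.mk d) =
      if g⁻¹ * d ∈ minimalParabolic F r s ∧ g⁻¹ * d ∉ Bsub F n then 1 else 0 := by
  simp only [heckeVec, Pi.add_apply, Finset.sum_apply, Pi.single_apply,
    eq_comm (a := (QuotientGroup.mk d : Cosets F n)), mk_mul_eq_mk_iff]
  set x := g⁻¹ * d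
  by_cases hP : x ∈ minimalParabolic F r s
  · have hdiag : x s r = 0 → x r r ≠ 0 := fun h0 =>
      (isUnit_apply_self_of_isUpperTriangular
        ((mem_Bsub_iff_of_mem_minimalParabolic hrs hP).mpr h0) r).ne_zero
    simp only [permGL_swap_inv_mul_mem_Bsub_iff hrs hP, transvGL_inv_mul_mem_Bsub_iff hrs hP,
      mem_Bsub_iff_of_mem_minimalParabolic hrs hP, ite_add_sum_ite_eq_mul hdiag]
    simp [hP]
  · have hnot {y : GLn F n} (hy : y ∈ minimalParabolic F r s) : y⁻¹ * x ∉ Bsub F n := fun h =>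
      hP ((mul_mem_cancel_left (inv_mem hy)).mp (Bsub_le_minimalParabolic hrs h))
    simp [hP, hnot (permGL_swap_mem_minimalParabolic r s),
      hnot (transvGL_mem_minimalParabolic hrs _)]

lemma genGB_mk (hrs : r ⋖ s) (g : GLn F n) :
    genGB F n K r (QuotientGroup.mk g) = heckeVec F K hrs g := by
  ext D
  obtain ⟨d, rfl⟩ := QuotientGroup.mk_surjective D
  set o := (QuotientGroup.mk g : Cosets F n).out
  have hB : g⁻¹ * o ∈ Bsub F n := QuotientGroup.eq.mp (QuotientGroup.out_eq' _).symm
  have hsplit : g⁻¹ * d = (g⁻¹ * o) * (o⁻¹ * d) := by group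
  rw [genGB_eq_heckeVec_out hrs, heckeVec_apply_mk, heckeVec_apply_mk, hsplit,
    mul_mem_cancel_left hB, mul_mem_cancel_left (Bsub_le_minimalParabolic hrs hB)]

lemma genGB_isSymm (hrs : r ⋖ s) : (genGB F n K r).IsSymm := by
  ext C D
  obtain ⟨c, rfl⟩ := QuotientGroup.mk_surjective C
  obtain ⟨d, rfl⟩ := QuotientGroup.mk_surjective D
  have hinv : d⁻¹ * c = (c⁻¹ * d)⁻¹ := by group
  rw [Matrix.transpose_apply, genGB_mk hrs, genGB_mk hrs, heckeVec_apply_mk, heckeVec_apply_mk,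
    hinv, inv_mem_iff, inv_mem_iff]

lemma genGB_mul_apply_mk {m : Type*} (hrs : r ⋖ s) (M : Matrix (Cosets F n) m K) (g : GLn F n) :
    (genGB F n K r * M) (QuotientGroup.mk g) =
      M (QuotientGroup.mk (g * permGL F n (Equiv.swap r s))) +
        ∑ t ∈ {0}ᶜ, M (QuotientGroup.mk (g * transvGL F n s r hrs.ne' t)) := by
  simp only [Matrix.mul_apply_eq_vecMul, genGB_mk hrs, heckeVec, Matrix.add_vecMul,
    Matrix.sum_vecMul, Matrix.single_one_vecMul, Matrix.row]

end HeckeAction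

section Cells

variable {F : Type} [Field F] [Fintype F] [DecidableEq F] {n : ℕ} {K : Type} [Field K]
  {r s : Fin n} {π σ : Equiv.Perm (Fin n)} {l : GLn F n} {C : Cosets F n}

lemma inDC_mk_mul_permGL (hl : l ∈ oppositeBorel F n) (π : Equiv.Perm (Fin n)) :
    inDC F n π (QuotientGroup.mk (l * permGL F n π)) :=
  ⟨l, 1, fun _ _ h => hl h, one_mem (Bsub F n), by rw [mul_one]⟩

lemma inDC.exists_mk_eq (h : inDC F n π C) :
    ∃ l ∈ oppositeBorel F n, QuotientGroup.mk (l * permGL F n π) = C := by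
  obtain ⟨l, b, hl, hb, rfl⟩ := h
  exact ⟨l, fun i j h => hl i j h, (QuotientGroup.mk_mul_of_mem _ hb).symm⟩

lemma inDC.unique (hπ : inDC F n π C) (hσ : inDC F n σ C) : π = σ := by
  obtain ⟨l, hl, rfl⟩ := hπ.exists_mk_eq
  obtain ⟨m, hm, hlm⟩ := hσ.exists_mk_eq
  have hlower : l⁻¹ * m ∈ oppositeBorel F n := mul_mem (inv_mem hl) hm
  have hupper : permGL F n π⁻¹ * (l⁻¹ * m * permGL F n σ) ∈ Bsub F n := by
    simpa only [permGL_inv, mul_inv_rev, mul_assoc] using QuotientGroup.eq.mp hlm.symm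
  refine (inv_mul_eq_one.mp (perm_eq_one_of_forall_le fun j => ?_))
  by_contra! hj
  have hzero := hupper _ _ hj
  rw [coe_permGL_mul, coe_mul_permGL] at hzero
  exact (isUnit_apply_self_of_isLowerTriangular hlower (σ j)).ne_zero (by simpa using hzero)

lemma inDC_mk_mul_permGL_mul_permGL (hl : l ∈ oppositeBorel F n) (π σ : Equiv.Perm (Fin n)) :
    inDC F n (π * σ) (QuotientGroup.mk (l * permGL F n π * permGL F n σ)) := by
  rw [mul_assoc, ← permGL_mul]
  exact inDC_mk_mul_permGL hl _

lemma inDC_mk_mul_permGL_mul_transvGL (hl : l ∈ oppositeBorel F n) (hne : s ≠ r)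
    (h : π r < π s) (t : F) :
    inDC F n π (QuotientGroup.mk (l * permGL F n π * transvGL F n s r hne t)) := by
  rw [mul_assoc, permGL_mul_transvGL, ← mul_assoc]
  exact inDC_mk_mul_permGL
    (mul_mem hl (transvGL_mem_blockTriangularSubgroup (b := toDual) _ h.le t)) π

-- In the `2 × 2` block at `r, s` this is the identity
-- `[1, 0; t, 1] = [1, t⁻¹; 0, 1] * [0, 1; 1, 0] * [t, 1; 0, -t⁻¹]`.
lemma mk_mul_transvGL_eq (hrs : r ⋖ s) (g : GLn F n) {t : F} (ht : t ≠ 0) :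
    (QuotientGroup.mk (g * transvGL F n s r hrs.ne' t) : Cosets F n) =
      QuotientGroup.mk (g * transvGL F n r s hrs.ne t⁻¹ * permGL F n (Equiv.swap r s)) := by
  refine ((mk_mul_eq_mk_iff _ _ _).mpr ?_).symm
  have hcancel : (g * transvGL F n r s hrs.ne t⁻¹)⁻¹ * (g * transvGL F n s r hrs.ne' t) =
      (transvGL F n r s hrs.ne t⁻¹)⁻¹ * transvGL F n s r hrs.ne' t := by group
  have hupper : transvGL F n r s hrs.ne t⁻¹ ∈ Bsub F n :=
    transvGL_mem_blockTriangularSubgroup (b := id) _ hrs.le _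
  rw [hcancel, permGL_swap_inv_mul_mem_Bsub_iff hrs (mul_mem
    (inv_mem (Bsub_le_minimalParabolic hrs hupper)) (transvGL_mem_minimalParabolic hrs t)),
    transvGL_inv_mul_apply_same]
  simp [transvGL, Matrix.transvection, ht, hrs.ne']

lemma inDC_mul_swap_mk_mul_permGL_mul_transvGL (hrs : r ⋖ s) (hl : l ∈ oppositeBorel F n)
    (h : π s < π r) {t : F} (ht : t ≠ 0) :
    inDC F n (π * Equiv.swap r s)
      (QuotientGroup.mk (l * permGL F n π * transvGL F n s r hrs.ne' t)) := by
  rw [mk_mul_transvGL_eq hrs _ ht, mul_assoc l, permGL_mul_transvGL, ← mul_assoc]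
  exact inDC_mk_mul_permGL_mul_permGL
    (mul_mem hl (transvGL_mem_blockTriangularSubgroup (b := toDual) _ h.le _)) _ _

lemma inDC.exists_of_genGB_ne_zero (hrs : r ⋖ s) {D : Cosets F n} (hC : inDC F n π C)
    (hD : genGB F n K r C D ≠ 0) : ∃ σ, inDC F n σ D := by
  obtain ⟨l, hl, rfl⟩ := hC.exists_mk_eq
  by_contra! hnot
  have hne {E : Cosets F n} {σ} (hE : inDC F n σ E) : D ≠ E := fun h => hnot σ (h ▸ hE)
  refine hD ?_
  rw [genGB_mk hrs, heckeVec, Pi.add_apply, Finset.sum_apply,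
    Pi.single_eq_of_ne (hne (inDC_mk_mul_permGL_mul_permGL hl _ _)), zero_add]
  refine Finset.sum_eq_zero fun t ht => Pi.single_eq_of_ne ?_ _
  obtain h | h := (π.injective.ne hrs.ne).lt_or_gt
  · exact hne (inDC_mk_mul_permGL_mul_transvGL hl _ h t)
  · exact hne (inDC_mul_swap_mk_mul_permGL_mul_transvGL hrs hl h (by simpa using ht))

end Cells

section Projection

variable {F : Type} [Field F] [Fintype F] [DecidableEq F] {n : ℕ} {K : Type} [Field K]
  {r s : Fin n} {π : Equiv.Perm (Fin n)} {C : Cosets F n}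

lemma inDC.projMat_apply (h : inDC F n π C) : projMat F n K C = Pi.single π 1 := by
  ext σ
  have hσ : inDC F n σ C ↔ σ = π := ⟨fun h' => h'.unique h, fun h' => h' ▸ h⟩
  simp [projMat, Pi.single_apply, hσ]

lemma genMatP_apply (hrs : r ⋖ s) (q : K) (π : Equiv.Perm (Fin n)) :
    genMatP n q r π =
      if π s < π r then Pi.single (π * Equiv.swap r s) q
      else Pi.single (π * Equiv.swap r s) 1 + Pi.single π (q - 1) := by
  obtain ⟨s, hs⟩ := s
  obtain rfl : (r : ℕ) + 1 = s := Nat.covBy_iff_add_one_eq.mp (Fin.covBy_iff.mp hrs)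
  ext σ
  by_cases h : π ⟨r + 1, hs⟩ < π r <;> simp [genMatP, hs, h, Pi.single_apply]

lemma projMat_mul_genMatP_apply (h : inDC F n π C) (q : K) (k : ℕ) :
    (projMat F n K * genMatP n q k) C = genMatP n q k π := by
  rw [Matrix.mul_apply_eq_vecMul, h.projMat_apply, Matrix.single_one_vecMul, Matrix.row]

lemma genGB_mul_projMat_apply (hrs : r ⋖ s) (h : inDC F n π C) :
    (genGB F n K r * projMat F n K) C = genMatP n (Fintype.card F : K) r π := by
  obtain ⟨l, hl, rfl⟩ := h.exists_mk_eq
  rw [genGB_mul_apply_mk hrs, (inDC_mk_mul_permGL_mul_permGL hl _ _).projMat_apply,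
    genMatP_apply hrs]
  have hcard : (({0}ᶜ : Finset F).card : K) = Fintype.card F - 1 := by
    rw [Finset.card_compl, Finset.card_singleton, Nat.cast_pred Fintype.card_pos]
  split_ifs with hπ
  · rw [Finset.sum_congr rfl fun t ht => (inDC_mul_swap_mk_mul_permGL_mul_transvGL hrs hl hπ
      (by simpa using ht)).projMat_apply, Finset.sum_const, ← Pi.single_smul, ← Pi.single_add,
      nsmul_one, hcard, add_sub_cancel]
  · have hlt : π r < π s := (not_lt.mp hπ).lt_of_ne (π.injective.ne hrs.ne)
    rw [Finset.sum_congr rfl fun t _ => (inDC_mk_mul_permGL_mul_transvGL hl hrs.ne' hlt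
      t).projMat_apply, Finset.sum_const, ← Pi.single_smul, nsmul_one, hcard]

theorem genGB_mul_projMat (hrs : r ⋖ s) :
    genGB F n K r * projMat F n K = projMat F n K * genMatP n (Fintype.card F : K) r := by
  ext C τ
  by_cases hC : ∃ π, inDC F n π C
  · obtain ⟨π, hπ⟩ := hC
    rw [genGB_mul_projMat_apply hrs hπ, projMat_mul_genMatP_apply hπ]
  · have hzero : projMat F n K C = 0 := by
      ext σ
      exact if_neg fun hσ => hC ⟨σ, hσ⟩
    rw [Matrix.mul_apply_eq_vecMul (projMat F n K), hzero, Matrix.zero_vecMul, Matrix.mul_apply]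
    refine Finset.sum_eq_zero fun D _ => ?_
    by_cases hD : inDC F n τ D
    · rw [← (genGB_isSymm hrs).apply C D, not_not.mp (mt (hD.exists_of_genGB_ne_zero hrs) hC),
        zero_mul]
    · rw [projMat, if_neg hD, mul_zero]

end Projection

section Inversions

lemma swap_lt_swap_of_covBy {α : Type*} [LinearOrder α] {r s a b : α} (hrs : r ⋖ s) (hab : a < b)
    (hne : (a, b) ≠ (r, s)) : Equiv.swap r s a < Equiv.swap r s b := by
  have hge : a < s → a ≤ r := hrs.le_of_lt
  have hle : r < b → s ≤ b := hrs.ge_of_gt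
  have hlt := hrs.lt
  simp only [Equiv.swap_apply_def]
  split_ifs <;> grind

lemma invCount_mul_swap {n : ℕ} {r s : Fin n} (hrs : r ⋖ s) {π : Equiv.Perm (Fin n)}
    (hπ : π r < π s) : invCount (π * Equiv.swap r s) = invCount π + 1 := by
  have hinsert : (Finset.univ.filter fun p : Fin n × Fin n =>
        p.1 < p.2 ∧ (π * Equiv.swap r s) p.2 < (π * Equiv.swap r s) p.1) =
      insert (r, s) ((Finset.univ.filter fun p : Fin n × Fin n => p.1 < p.2 ∧ π p.2 < π p.1).map
        ((Equiv.swap r s).prodCongr (Equiv.swap r s)).toEmbedding) := by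
    ext ⟨a, b⟩
    rw [Finset.mem_filter_univ, Finset.mem_insert, Finset.mem_map_equiv, Finset.mem_filter_univ]
    simp only [Equiv.prodCongr_symm, Equiv.prodCongr_apply, Prod.map, Equiv.Perm.mul_apply,
      Equiv.symm_swap]
    constructor
    · rintro ⟨hab, hinv⟩
      exact or_iff_not_imp_left.mpr fun hne => ⟨swap_lt_swap_of_covBy hrs hab hne, hinv⟩
    · rintro (⟨⟨⟩⟩ | ⟨hab, hinv⟩)
      · exact ⟨hrs.lt, by simpa using hπ⟩
      · have hne : (Equiv.swap r s a, Equiv.swap r s b) ≠ (r, s) := fun h => by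
          rw [(Prod.mk.inj h).1, (Prod.mk.inj h).2] at hinv
          exact hπ.not_gt hinv
        exact ⟨by simpa using swap_lt_swap_of_covBy hrs hab hne, hinv⟩
  rw [invCount, invCount, hinsert, Finset.card_insert_of_notMem, Finset.card_map]
  simp [hrs.lt.not_gt]

end Inversions

section Inclusion

variable {F : Type} [Field F] [Fintype F] [DecidableEq F] {n : ℕ} {K : Type} [Field K]
  {r s : Fin n}

lemma genMatP_mul_pow_invCount (hrs : r ⋖ s) (q : K) (π σ : Equiv.Perm (Fin n)) :
    genMatP n q r π σ * q ^ invCount σ = q ^ invCount π * genMatP n q r σ π := by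
  have hself (π : Equiv.Perm (Fin n)) : π * Equiv.swap r s * Equiv.swap r s = π := by
    rw [mul_assoc, Equiv.swap_mul_self, mul_one]
  have hne (π : Equiv.Perm (Fin n)) : π * Equiv.swap r s ≠ π := by
    simpa using hrs.ne
  obtain rfl | hσ := eq_or_ne σ π
  · rw [mul_comm]
  obtain rfl | hσ' := eq_or_ne σ (π * Equiv.swap r s)
  · obtain h | h := (π.injective.ne hrs.ne).lt_or_gt
    · simp [genMatP_apply hrs, h, h.not_gt, invCount_mul_swap hrs h, pow_succ, hne, hself]
    · have hcount := invCount_mul_swap hrs (π := π * Equiv.swap r s) (by simpa using h)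
      rw [hself] at hcount
      simp [genMatP_apply hrs, h, h.not_gt, hcount, pow_succ', hne, hself]
  · have hπ' : π ≠ σ * Equiv.swap r s := fun h => hσ' (by rw [h, hself])
    rw [genMatP_apply hrs, genMatP_apply hrs]
    split_ifs <;> simp [hσ, hσ.symm, hσ', hπ']

/-- The diagonal matrix with entries `q ^ inv(π)`. It rescales the transpose of the projection to
the inclusion, and it symmetrizes the Hecke generators on `K S_n`. -/
def inversionWeight (n : ℕ) (q : K) : Matrix (Equiv.Perm (Fin n)) (Equiv.Perm (Fin n)) K :=
  Matrix.diagonal fun π => q ^ invCount π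

lemma genMatP_mul_inversionWeight (hrs : r ⋖ s) (q : K) :
    genMatP n q r * inversionWeight n q = inversionWeight n q * (genMatP n q r)ᵀ := by
  ext π σ
  rw [inversionWeight, Matrix.mul_diagonal, Matrix.diagonal_mul, Matrix.transpose_apply,
    genMatP_mul_pow_invCount hrs]

lemma inclMat_eq_inversionWeight_mul_transpose :
    inclMat F n K = inversionWeight n (Fintype.card F : K) * (projMat F n K)ᵀ := by
  ext π C
  rw [inversionWeight, Matrix.diagonal_mul]
  simp [inclMat, projMat]

theorem genMatP_mul_inclMat (hrs : r ⋖ s) :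
    genMatP n (Fintype.card F : K) r * inclMat F n K = inclMat F n K * genGB F n K r := by
  rw [inclMat_eq_inversionWeight_mul_transpose, ← Matrix.mul_assoc, genMatP_mul_inversionWeight hrs,
    Matrix.mul_assoc, ← Matrix.transpose_mul, ← genGB_mul_projMat hrs, Matrix.transpose_mul,
    (genGB_isSymm hrs).eq, Matrix.mul_assoc]

end Inclusion

theorem hecke_generators_intertwine_general (F : Type) [Field F] [Fintype F] [DecidableEq F]
    (K : Type) [Field K] (n : ℕ) (k : ℕ) (hk : k + 1 < n) :
    genGB F n K k * projMat F n K = projMat F n K * genMatP n (Fintype.card F : K) k ∧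
    genMatP n (Fintype.card F : K) k * inclMat F n K = inclMat F n K * genGB F n K k := by
  have hcov : (⟨k, Nat.lt_of_succ_lt hk⟩ : Fin n) ⋖ ⟨k + 1, hk⟩ :=
    Fin.covBy_iff.mpr (Nat.covBy_iff_add_one_eq.mpr rfl)
  exact ⟨genGB_mul_projMat hcov, genMatP_mul_inclMat hcov⟩

/-- Let `q` be a prime power (the cardinality of the finite field `F`).
For every generator index `1 ≤ i ≤ n-1` (0-based `k = i - 1`, so `k + 1 < n`), the
projection and inclusion maps intertwine the Hecke generator actions on `ℂ[G/B]` and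
`ℂS_n`: in row-vector convention these matrix identities say exactly
`proj((hB)·T_i) = proj(hB)·T_i` for every `h ∈ GL_n(F_q)` and
`incl(π·T_i) = incl(π)·T_i` for every `π ∈ S_n`. -/
theorem hecke_generators_intertwine (F : Type) [Field F] [Fintype F] [DecidableEq F]
    (n : ℕ) (k : ℕ) (hk : k + 1 < n) :
    genGB F n ℂ k * projMat F n ℂ =
      projMat F n ℂ * genMatP n (Fintype.card F : ℂ) k ∧
    genMatP n (Fintype.card F : ℂ) k * inclMat F n ℂ =
      inclMat F n ℂ * genGB F n ℂ k := by
  exact hecke_generators_intertwine_general F ℂ n k hk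

end QTsetlin
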